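/- For any initial graph function α on a strongly connected directed graph G, any fair infinite sequence of raising operations converges edgewise to a raising-balanced graph function that is the same for all fair sequences; symmetrically, any fair infinite sequence of lowering operations converges edgewise to a lowering-balanced graph function that is the same for all fair sequences. -/

import Mathlib

open Filter Topology

variable {V : Type*}

/-- Maximum weight of an edge leaving `v` (as a supremum over the finite edge set). -/
noncomputable def outMax (E : V → V → Prop) (α : V → V → ℝ) (v : V) : ℝ :=
  sSup {x : ℝ | ∃ w, E v w ∧ x = α v w}

/-- Maximum weight of an edge entering `v`. -/
noncomputable def inMax (E : V → V → Prop) (α : V → V → ℝ) (v : V) : ℝ :=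
  sSup {x : ℝ | ∃ u, E u v ∧ x = α u v}

/-- A graph function is balanced if the max outgoing weight equals the max incoming
weight at every vertex. -/
def IsBalancedGF (E : V → V → Prop) (α : V → V → ℝ) : Prop :=
  ∀ v, outMax E α v = inMax E α v

/-- Raising imbalance at `v`. -/
noncomputable def rhoR (E : V → V → Prop) (α : V → V → ℝ) (v : V) : ℝ :=
  max 0 (outMax E α v - inMax E α v)

/-- Lowering imbalance at `v`. -/
noncomputable def rhoL (E : V → V → Prop) (α : V → V → ℝ) (v : V) : ℝ :=
  max 0 (inMax E α v - outMax E α v)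

/-- A balancing operation at `v`: add `(α_v^out − α_v^in)/2` to every edge entering `v`
and subtract the same quantity from every edge leaving `v` (a self-loop is unchanged). -/
noncomputable def balanceAt [DecidableEq V] (E : V → V → Prop) (α : V → V → ℝ) (v : V) :
    V → V → ℝ :=
  fun a b =>
    α a b + (if b = v then (outMax E α v - inMax E α v) / 2 else 0)
          - (if a = v then (outMax E α v - inMax E α v) / 2 else 0)

/-- A raising operation at `v`: balance at `v` if the raising imbalance is positive,
otherwise do nothing. -/
noncomputable def raiseOp [DecidableEq V] (E : V → V → Prop) (α : V → V → ℝ) (v : V) :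
    V → V → ℝ :=
  if 0 < rhoR E α v then balanceAt E α v else α

/-- A lowering operation at `v`: balance at `v` if the lowering imbalance is positive,
otherwise do nothing. -/
noncomputable def lowerOp [DecidableEq V] (E : V → V → Prop) (α : V → V → ℝ) (v : V) :
    V → V → ℝ :=
  if 0 < rhoL E α v then balanceAt E α v else α

/-- A sequence of vertices is fair if every vertex appears infinitely often. -/
def Fair (σ : ℕ → V) : Prop := ∀ (v : V) (N : ℕ), ∃ t, N ≤ t ∧ σ t = v

/-- State after `t` raising operations along the sequence `σ`. -/
noncomputable def raiseIter [DecidableEq V] (E : V → V → Prop) (α : V → V → ℝ)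
    (σ : ℕ → V) : ℕ → V → V → ℝ
  | 0 => α
  | t + 1 => raiseOp E (raiseIter E α σ t) (σ t)

/-- State after `t` lowering operations along the sequence `σ`. -/
noncomputable def lowerIter [DecidableEq V] (E : V → V → Prop) (α : V → V → ℝ)
    (σ : ℕ → V) : ℕ → V → V → ℝ
  | 0 => α
  | t + 1 => lowerOp E (lowerIter E α σ t) (σ t)

/-- The raising vector: cumulative amount by which each vertex has been raised after
`t` raising operations along `σ`. -/
noncomputable def rvec [DecidableEq V] (E : V → V → Prop) (α : V → V → ℝ)
    (σ : ℕ → V) : ℕ → V → ℝ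
  | 0 => fun _ => 0
  | t + 1 => fun u =>
      rvec E α σ t u + (if u = σ t then rhoR E (raiseIter E α σ t) (σ t) / 2 else 0)

/-- State after performing raising operations along a finite list of vertices. -/
noncomputable def raiseList [DecidableEq V] (E : V → V → Prop) :
    (V → V → ℝ) → List V → V → V → ℝ
  | α, [] => α
  | α, v :: l => raiseList E (raiseOp E α v) l

/-- Raising vector accumulated along a finite list of raising operations. -/
noncomputable def rvecList [DecidableEq V] (E : V → V → Prop) :
    (V → V → ℝ) → List V → V → ℝ
  | _, [] => fun _ => 0
  | α, v :: l => fun u =>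
      (if u = v then rhoR E α v / 2 else 0) + rvecList E (raiseOp E α v) l u

/-- State after performing (unconditional) balancing operations along a list. -/
noncomputable def balList [DecidableEq V] (E : V → V → Prop) :
    (V → V → ℝ) → List V → V → V → ℝ
  | α, [] => α
  | α, v :: l => balList E (balanceAt E α v) l

/-- State after `t` balancing operations along the sequence `σ`. -/
noncomputable def balIter [DecidableEq V] (E : V → V → Prop) (α : V → V → ℝ)
    (σ : ℕ → V) : ℕ → V → V → ℝ
  | 0 => α
  | t + 1 => balanceAt E (balIter E α σ t) (σ t)

/-- Two graph functions are equivalent if their sums around every directed cycle agree. -/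
def Equivalent (E : V → V → Prop) (α γ : V → V → ℝ) : Prop :=
  ∀ (k : ℕ) (f : ZMod (k + 1) → V), (∀ i, E (f i) (f (i + 1))) →
    (∑ i, α (f i) (f (i + 1))) = ∑ i, γ (f i) (f (i + 1))

/-- The raising-balanced graph function determined by the limiting raising vector. -/
noncomputable def alphaR (α : V → V → ℝ) (rstar : V → ℝ) : V → V → ℝ :=
  fun u v => α u v + rstar v - rstar u

/-- Height of a vertex: `y_v = -r*_v`. -/
noncomputable def height (rstar : V → ℝ) (v : V) : ℝ := -rstar v

/-- Level of a vertex: maximum over incoming edges of `α^R`. -/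
noncomputable def level (E : V → V → Prop) (α : V → V → ℝ) (rstar : V → ℝ) (v : V) : ℝ :=
  inMax E (alphaR α rstar) v

/-- Momentum of a vertex: `m_v = max over edges (u,v) entering v of (α_{uv} − x_v)`. -/
noncomputable def momentum (E : V → V → Prop) (α : V → V → ℝ) (rstar : V → ℝ) (v : V) : ℝ :=
  sSup {c : ℝ | ∃ u, E u v ∧ c = α u v - level E α rstar v}

/-!
Each raising operation leaves `α` of the form `α_uv + r_v - r_u`, where the raising vector `r`
is nondecreasing in time, so everything rests on `r` being bounded. If it were not, let `U` be
the set of vertices where `r` diverges. Raising never increases the maximum edge weight, so no edge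
enters `U` from outside, and the weights of the edges leaving `U` tend to `-∞`. By contrast the
heaviest edge inside `U` is bounded below, by looking at an edge into a vertex of `U` with maximal
`r`. A vertex that has been raised satisfies `α_v^in ≤ α_v^out` forever after, so at a late time,
starting from a heaviest edge with tail in `U` and always continuing along a heaviest outgoing edge,
one walks inside `U` along edges of the same weight `M`, and eventually around a cycle. Later
operations keep all edges with tail in `U` at weight at most `M`, hence no vertex of that cycle is
ever raised again: a contradiction.

By monotonicity of the operations, every nonnegative `s` for which `α_uv + s_v - s_u` is
raising-balanced bounds `r` from above. By fairness the limit of `r` is itself such an `s`, so it is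
the least one and does not depend on the sequence. Lowering is raising on the reversed graph.
-/

section Maxima

variable {E : V → V → Prop} {α : V → V → ℝ} {u v : V}

lemma inMax_flip : inMax (flip E) (flip α) v = outMax E α v := rfl

lemma outMax_flip : outMax (flip E) (flip α) v = inMax E α v := rfl

lemma inMax_le {c : ℝ} (hv : ∃ u, E u v) (h : ∀ u, E u v → α u v ≤ c) : inMax E α v ≤ c :=
  csSup_le (hv.elim fun u hu => ⟨α u v, u, hu, rfl⟩) (by rintro _ ⟨u, hu, rfl⟩; exact h u hu)

lemma outMax_le {c : ℝ} (hv : ∃ w, E v w) (h : ∀ w, E v w → α v w ≤ c) : outMax E α v ≤ c :=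
  inMax_le (E := flip E) (α := flip α) hv h

variable [Finite V]

lemma inMax_eq_sup' (hv : {u | E u v}.toFinite.toFinset.Nonempty) :
    inMax E α v = {u | E u v}.toFinite.toFinset.sup' hv fun u => α u v := by
  rw [Finset.sup'_eq_csSup_image]
  simp [inMax, Set.image, eq_comm]

lemma le_inMax (h : E u v) : α u v ≤ inMax E α v := by
  rw [inMax_eq_sup' ⟨u, by simpa⟩]
  exact Finset.le_sup' (fun u => α u v) (by simpa)

lemma le_outMax (h : E u v) : α u v ≤ outMax E α u :=
  le_inMax (E := flip E) (α := flip α) h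

lemma exists_eq_inMax (hv : ∃ u, E u v) : ∃ u, E u v ∧ α u v = inMax E α v := by
  have hne : {u | E u v}.toFinite.toFinset.Nonempty := by simpa [Set.Nonempty]
  obtain ⟨u, hu, h⟩ := Finset.exists_mem_eq_sup' hne fun u => α u v
  exact ⟨u, by simpa using hu, by rw [inMax_eq_sup' hne, h]⟩

lemma exists_eq_outMax (hv : ∃ w, E v w) : ∃ w, E v w ∧ α v w = outMax E α v :=
  exists_eq_inMax (E := flip E) (α := flip α) hv

lemma continuous_inMax (hv : ∃ u, E u v) : Continuous fun α => inMax E α v := by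
  have hne : {u | E u v}.toFinite.toFinset.Nonempty := by simpa [Set.Nonempty]
  simp only [inMax_eq_sup' hne]
  exact Continuous.finset_sup'_apply hne fun u _ => by fun_prop

lemma continuous_outMax (hv : ∃ w, E v w) : Continuous fun α => outMax E α v :=
  (continuous_inMax (E := flip E) hv).comp (by unfold flip; fun_prop : Continuous flip)

lemma continuous_rhoR (hout : ∃ w, E v w) (hin : ∃ u, E u v) :
    Continuous fun α => rhoR E α v :=
  continuous_const.max ((continuous_outMax hout).sub (continuous_inMax hin))

end Maxima

section RaisingOperation

variable {E : V → V → Prop} {α : V → V → ℝ}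

lemma rhoR_nonneg (v : V) : 0 ≤ rhoR E α v := le_max_left _ _

lemma rhoR_eq_zero_iff {v : V} : rhoR E α v = 0 ↔ outMax E α v ≤ inMax E α v := by
  rw [rhoR, max_eq_left_iff, sub_nonpos]

lemma rhoR_eq_sub_of_pos {v : V} (h : 0 < rhoR E α v) :
    rhoR E α v = outMax E α v - inMax E α v :=
  max_eq_right ((lt_max_iff.1 h).resolve_left (lt_irrefl 0)).le

lemma alphaR_zero : alphaR α 0 = α := by
  funext u v
  simp [alphaR]

lemma alphaR_alphaR (r s : V → ℝ) : alphaR (alphaR α r) s = alphaR α (r + s) := by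
  funext u v
  simp only [alphaR, Pi.add_apply]
  ring

lemma continuous_alphaR : Continuous (alphaR α) := by
  unfold alphaR
  fun_prop

lemma rhoR_alphaR_le [Finite V] {r s : V → ℝ} {v : V} (hout : ∃ w, E v w) (hin : ∃ u, E u v)
    (hrs : r ≤ s) (hs : rhoR E (alphaR α s) v = 0) :
    rhoR E (alphaR α r) v ≤ 2 * (s v - r v) := by
  have h_out : outMax E (alphaR α r) v ≤ outMax E (alphaR α s) v + (s v - r v) :=
    outMax_le hout fun w hw => by
      have := le_outMax (α := alphaR α s) hw
      have := hrs w
      simp only [alphaR] at *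
      linarith
  have h_in : inMax E (alphaR α s) v ≤ inMax E (alphaR α r) v + (s v - r v) :=
    inMax_le hin fun u hu => by
      have := le_inMax (α := alphaR α r) hu
      have := hrs u
      simp only [alphaR] at *
      linarith
  have h_bal := rhoR_eq_zero_iff.1 hs
  exact max_le (by linarith [hrs v]) (by linarith)

variable [DecidableEq V]

lemma raiseOp_of_rhoR_eq_zero {v : V} (h : rhoR E α v = 0) : raiseOp E α v = α :=
  if_neg h.not_gt

lemma raiseOp_eq_alphaR (v : V) :
    raiseOp E α v = alphaR α (Pi.single v (rhoR E α v / 2)) := by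
  rcases (rhoR_nonneg v).eq_or_lt with h | h
  · rw [raiseOp_of_rhoR_eq_zero h.symm, ← h, zero_div, Pi.single_zero, alphaR_zero]
  · funext a b
    rw [raiseOp, if_pos h, rhoR_eq_sub_of_pos h]
    simp only [balanceAt, alphaR, Pi.single_apply]

lemma single_half_rhoR_nonneg (v : V) : 0 ≤ (Pi.single v (rhoR E α v / 2) : V → ℝ) :=
  Pi.single_nonneg.2 (div_nonneg (rhoR_nonneg v) zero_le_two)

lemma raiseOp_apply_le (u v w : V) :
    raiseOp E α v u w ≤ α u w + (Pi.single v (rhoR E α v / 2) : V → ℝ) w := by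
  have := single_half_rhoR_nonneg (E := E) (α := α) v u
  rw [raiseOp_eq_alphaR, alphaR]
  simp only [Pi.zero_apply] at this
  linarith

lemma le_raiseOp_apply (u v w : V) :
    α u w - (Pi.single v (rhoR E α v / 2) : V → ℝ) u ≤ raiseOp E α v u w := by
  have := single_half_rhoR_nonneg (E := E) (α := α) v w
  rw [raiseOp_eq_alphaR, alphaR]
  simp only [Pi.zero_apply] at this
  linarith

variable [Finite V]

lemma raiseOp_apply_le_max {u w : V} (v : V) (huw : E u w) :
    raiseOp E α v u w ≤ max (α u w) (outMax E α w) := by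
  have h := raiseOp_apply_le (E := E) (α := α) u v w
  rcases (rhoR_nonneg (E := E) (α := α) v).eq_or_lt with hv | hv
  · exact le_max_of_le_left (by simpa [← hv] using h)
  · obtain rfl | hwv := eq_or_ne w v
    · rw [Pi.single_eq_same] at h
      exact le_max_of_le_right (by linarith [le_inMax (α := α) huw, rhoR_eq_sub_of_pos hv])
    · exact le_max_of_le_left (by simpa [hwv] using h)

lemma inMax_raiseOp_le {u : V} (v : V) (hin : ∃ w, E w u) :
    inMax E (raiseOp E α v) u ≤
      inMax E α u + (Pi.single v (rhoR E α v / 2) : V → ℝ) u :=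
  inMax_le hin fun w hw => (raiseOp_apply_le w v u).trans (by gcongr; exact le_inMax hw)

lemma le_outMax_raiseOp {u : V} (v : V) (hout : ∃ w, E u w) :
    outMax E α u - (Pi.single v (rhoR E α v / 2) : V → ℝ) u ≤
      outMax E (raiseOp E α v) u := by
  obtain ⟨w, hw, h⟩ := exists_eq_outMax (α := α) hout
  rw [← h]
  exact (le_raiseOp_apply u v w).trans (le_outMax hw)

lemma inMax_le_outMax_raiseOp_self {v : V} (hout : ∃ w, E v w) (hin : ∃ u, E u v)
    (hv : 0 < rhoR E α v) : inMax E (raiseOp E α v) v ≤ outMax E (raiseOp E α v) v := by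
  have h_in := inMax_raiseOp_le (α := α) v hin
  have h_out := le_outMax_raiseOp (α := α) v hout
  rw [Pi.single_eq_same] at h_in h_out
  linarith [rhoR_eq_sub_of_pos hv]

lemma inMax_le_outMax_raiseOp {u : V} (v : V) (hout : ∃ w, E u w) (hin : ∃ w, E w u)
    (h : inMax E α u ≤ outMax E α u) :
    inMax E (raiseOp E α v) u ≤ outMax E (raiseOp E α v) u := by
  rcases (rhoR_nonneg (E := E) (α := α) v).eq_or_lt with hv | hv
  · rwa [raiseOp_of_rhoR_eq_zero hv.symm]
  obtain rfl | huv := eq_or_ne u v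
  · exact inMax_le_outMax_raiseOp_self hout hin hv
  · have h_in := inMax_raiseOp_le (α := α) v hin
    have h_out := le_outMax_raiseOp (α := α) v hout
    rw [Pi.single_eq_of_ne huv] at h_in h_out
    linarith

end RaisingOperation

section RaisingSequence

variable [DecidableEq V] {E : V → V → Prop} {α : V → V → ℝ} {σ : ℕ → V}

lemma rvec_succ (t : ℕ) :
    rvec E α σ (t + 1) =
      rvec E α σ t + Pi.single (σ t) (rhoR E (raiseIter E α σ t) (σ t) / 2) := by
  funext u
  simp [rvec, Pi.single_apply]

lemma raiseIter_eq_alphaR (t : ℕ) : raiseIter E α σ t = alphaR α (rvec E α σ t) := by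
  induction t with
  | zero => exact alphaR_zero.symm
  | succ t ih => rw [rvec_succ, ← alphaR_alphaR, ← ih, raiseIter, raiseOp_eq_alphaR]

lemma raiseIter_apply (t : ℕ) (u v : V) :
    raiseIter E α σ t u v = α u v + rvec E α σ t v - rvec E α σ t u := by
  rw [raiseIter_eq_alphaR, alphaR]

lemma monotone_rvec : Monotone (rvec E α σ) :=
  monotone_nat_of_le_succ fun t => by
    rw [rvec_succ]
    exact le_add_of_nonneg_right (single_half_rhoR_nonneg (σ t))

lemma rvec_nonneg (t : ℕ) : 0 ≤ rvec E α σ t := monotone_rvec t.zero_le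

variable [Finite V]

lemma rvec_le (hout : ∀ v, ∃ w, E v w) (hin : ∀ v, ∃ u, E u v) {s : V → ℝ} (hs₀ : 0 ≤ s)
    (hs : ∀ v, rhoR E (alphaR α s) v = 0) (t : ℕ) : rvec E α σ t ≤ s := by
  induction t with
  | zero => exact hs₀
  | succ t ih =>
    intro v
    rw [rvec_succ, raiseIter_eq_alphaR, Pi.add_apply]
    obtain rfl | hv := eq_or_ne v (σ t)
    · rw [Pi.single_eq_same]
      linarith [rhoR_alphaR_le (hout (σ t)) (hin (σ t)) ih (hs (σ t))]
    · simpa [hv] using ih v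

lemma inMax_le_outMax_raiseIter_of_rvec_pos {v : V} (hout : ∃ w, E v w) (hin : ∃ u, E u v)
    {t : ℕ} (hv : 0 < rvec E α σ t v) :
    inMax E (raiseIter E α σ t) v ≤ outMax E (raiseIter E α σ t) v := by
  induction t with
  | zero => exact absurd hv (lt_irrefl 0)
  | succ t ih =>
    rcases (rvec_nonneg (E := E) (α := α) (σ := σ) t v).eq_or_lt with hv₀ | hv₀
    · rw [rvec_succ, Pi.add_apply, ← hv₀, Pi.zero_apply, zero_add] at hv
      obtain rfl : v = σ t := by
        by_contra hne
        simp [hne] at hv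
      rw [Pi.single_eq_same] at hv
      exact inMax_le_outMax_raiseOp_self hout hin (by linarith)
    · exact inMax_le_outMax_raiseOp (σ t) hout hin (ih hv₀)

lemma outMax_raiseIter_le_of_leaving_le {U : Set V} {M : ℝ} {T : ℕ}
    (hout : ∀ v ∈ U, ∃ w, E v w)
    (hleave : ∀ t ≥ T, ∀ u ∈ U, ∀ w ∉ U, raiseIter E α σ t u w ≤ M)
    (hT : ∀ u ∈ U, outMax E (raiseIter E α σ T) u ≤ M) :
    ∀ t ≥ T, ∀ u ∈ U, outMax E (raiseIter E α σ t) u ≤ M := by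
  intro t ht
  induction t, ht using Nat.le_induction with
  | base => exact hT
  | succ t ht ih =>
    refine fun u hu => outMax_le (hout u hu) fun w huw => ?_
    by_cases hw : w ∈ U
    · exact (raiseOp_apply_le_max (σ t) huw).trans
        (max_le ((le_outMax huw).trans (ih u hu)) (ih w hw))
    · exact hleave (t + 1) (ht.trans t.le_succ) u hu w hw

lemma rvec_eq_of_critical {C : Set V} {M : ℝ} {T : ℕ}
    (hle : ∀ t ≥ T, ∀ v ∈ C, outMax E (raiseIter E α σ t) v ≤ M)
    (hC : ∀ v ∈ C, ∃ u ∈ C, E u v ∧ M ≤ raiseIter E α σ T u v) :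
    ∀ t ≥ T, ∀ v ∈ C, rvec E α σ t v = rvec E α σ T v := by
  intro t ht
  induction t, ht using Nat.le_induction with
  | base => exact fun _ _ => rfl
  | succ t ht ih =>
    intro v hv
    obtain ⟨u, hu, huv, hM⟩ := hC v hv
    have h_in : M ≤ inMax E (raiseIter E α σ t) v := calc
      M ≤ raiseIter E α σ T u v := hM
      _ = raiseIter E α σ t u v := by rw [raiseIter_apply, raiseIter_apply, ih u hu, ih v hv]
      _ ≤ inMax E (raiseIter E α σ t) v := le_inMax huv
    have hρ : rhoR E (raiseIter E α σ t) v = 0 :=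
      rhoR_eq_zero_iff.2 ((hle t ht v hv).trans h_in)
    rw [rvec_succ, Pi.add_apply, ih v hv]
    obtain rfl | hne := eq_or_ne v (σ t)
    · rw [hρ, zero_div, Pi.single_zero, Pi.zero_apply, add_zero]
    · rw [Pi.single_eq_of_ne hne, add_zero]

end RaisingSequence

section Boundedness

lemma exists_subset_forall_exists_pred [Finite V] {R : V → V → Prop} {S : Set V}
    (hS : S.Nonempty) (h : ∀ v ∈ S, ∃ w ∈ S, R v w) :
    ∃ C ⊆ S, C.Nonempty ∧ ∀ v ∈ C, ∃ u ∈ C, R u v := by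
  -- The successors of a minimal forward-closed set `C` form a forward-closed subset, hence all
  -- of `C`.
  obtain ⟨C, hCS, ⟨⟨v, hv⟩, hC⟩, hmin⟩ := exists_minimal_le_of_wellFoundedLT
    (fun D : Set V => D.Nonempty ∧ ∀ v ∈ D, ∃ w ∈ D, R v w) S ⟨hS, h⟩
  obtain ⟨w, hw, hvw⟩ := hC v hv
  have hsucc : C ⊆ {w ∈ C | ∃ u ∈ C, R u w} :=
    hmin ⟨⟨w, hw, v, hv, hvw⟩, fun x hx =>
      (hC x hx.1).imp fun y hy => ⟨⟨hy.1, x, hx.1, hy.2⟩, hy.2⟩⟩ fun _ hx => hx.1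
  exact ⟨C, hCS, ⟨v, hv⟩, fun v hv => (hsucc hv).2⟩

variable {E : V → V → Prop} {α : V → V → ℝ}

lemma exists_critical_set [Finite V] {U : Set V} {L : ℝ} (hout : ∀ v ∈ U, ∃ w, E v w)
    (hlow : ∃ u ∈ U, L ≤ outMax E α u) (hleave : ∀ u ∈ U, ∀ w ∉ U, α u w < L)
    (hbal : ∀ v ∈ U, inMax E α v ≤ outMax E α v) :
    ∃ M ≥ L, (∀ u ∈ U, outMax E α u ≤ M) ∧
      ∃ C ⊆ U, C.Nonempty ∧ ∀ v ∈ C, ∃ u ∈ C, E u v ∧ M ≤ α u v := by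
  obtain ⟨u₀, hu₀, hL⟩ := hlow
  obtain ⟨m, hm, hmax⟩ := Set.exists_max_image U (outMax E α) U.toFinite ⟨u₀, hu₀⟩
  have hLM : L ≤ outMax E α m := hL.trans (hmax u₀ hu₀)
  have hwalk : ∀ v ∈ {v ∈ U | outMax E α v = outMax E α m},
      ∃ w ∈ {w ∈ U | outMax E α w = outMax E α m}, E v w ∧ outMax E α m ≤ α v w := by
    rintro v ⟨hvU, hv⟩
    obtain ⟨w, hvw, hw⟩ := exists_eq_outMax (α := α) (hout v hvU)
    have hMw : outMax E α m ≤ α v w := by rw [hw, hv]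
    have hwU : w ∈ U := by
      by_contra hwU
      linarith [hleave v hvU w hwU]
    have hw_out : outMax E α m ≤ outMax E α w :=
      hMw.trans ((le_inMax hvw).trans (hbal w hwU))
    exact ⟨w, ⟨hwU, (hmax w hwU).antisymm hw_out⟩, hvw, hMw⟩
  obtain ⟨C, hCS, hC, hpred⟩ :=
    exists_subset_forall_exists_pred (R := fun v w => E v w ∧ outMax E α m ≤ α v w)
      (S := {v ∈ U | outMax E α v = outMax E α m}) ⟨m, hm, rfl⟩ hwalk
  exact ⟨outMax E α m, hLM, hmax, C, fun v hv => (hCS hv).1, hC, hpred⟩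

lemma exists_forall_exists_le_outMax_alphaR [Finite V] (E : V → V → Prop) (α : V → V → ℝ) :
    ∃ L, ∀ (r : V → ℝ) (U : Set V), U.Nonempty → (∀ v ∈ U, ∃ u ∈ U, E u v) →
      ∃ u ∈ U, L ≤ outMax E (alphaR α r) u := by
  obtain ⟨L, hL⟩ := (Set.finite_range fun p : V × V => α p.1 p.2).bddBelow
  refine ⟨L, fun r U hU hpred => ?_⟩
  obtain ⟨v, hv, hmax⟩ := Set.exists_max_image U r U.toFinite hU
  obtain ⟨u, hu, huv⟩ := hpred v hv
  refine ⟨u, hu, ?_⟩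
  calc L ≤ α u v := hL ⟨(u, v), rfl⟩
    _ ≤ alphaR α r u v := by
      rw [alphaR]
      linarith [hmax u hu]
    _ ≤ outMax E (alphaR α r) u := le_outMax huv

variable [DecidableEq V] {σ : ℕ → V}

/-- The vertices whose total raising along `σ` is unbounded. Boundedness of the raising vector is
the statement that this set is empty. -/
def divergentSet (E : V → V → Prop) (α : V → V → ℝ) (σ : ℕ → V) : Set V :=
  {v | ¬ BddAbove (Set.range fun t => rvec E α σ t v)}

lemma tendsto_rvec_atTop_of_mem_divergentSet {v : V} (hv : v ∈ divergentSet E α σ) :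
    Tendsto (fun t => rvec E α σ t v) atTop atTop :=
  tendsto_atTop_atTop_of_monotone' (fun _ _ hst => monotone_rvec hst v) hv

lemma exists_forall_rvec_le_of_notMem_divergentSet {v : V} (hv : v ∉ divergentSet E α σ) :
    ∃ b, ∀ t, rvec E α σ t v ≤ b :=
  (not_not.1 hv).imp fun _ hb t => hb ⟨t, rfl⟩

variable [Finite V]

lemma exists_forall_outMax_raiseIter_le (hout : ∀ v, ∃ w, E v w) :
    ∃ M, ∀ t u, outMax E (raiseIter E α σ t) u ≤ M := by
  obtain ⟨M, hM⟩ := (Set.finite_range (outMax E α)).bddAbove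
  exact ⟨M, fun t u => outMax_raiseIter_le_of_leaving_le (U := Set.univ) (T := 0)
    (fun v _ => hout v) (fun _ _ _ _ w hw => absurd (Set.mem_univ w) hw) (fun u _ => hM ⟨u, rfl⟩)
    t t.zero_le u (Set.mem_univ u)⟩

lemma mem_divergentSet_of_edge (hout : ∀ v, ∃ w, E v w) {u v : V} (huv : E u v)
    (hv : v ∈ divergentSet E α σ) : u ∈ divergentSet E α σ := by
  obtain ⟨M, hM⟩ := exists_forall_outMax_raiseIter_le (α := α) (σ := σ) hout
  by_contra hu
  obtain ⟨b, hb⟩ := exists_forall_rvec_le_of_notMem_divergentSet hu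
  refine hv ⟨b + M - α u v, ?_⟩
  rintro _ ⟨t, rfl⟩
  have hle := (le_outMax huv).trans (hM t u)
  rw [raiseIter_apply] at hle
  linarith [hb t]

lemma eventually_raiseIter_lt_of_leaving_divergentSet (L : ℝ) :
    ∀ᶠ t in atTop, ∀ u ∈ divergentSet E α σ, ∀ w ∉ divergentSet E α σ,
      raiseIter E α σ t u w < L := by
  simp only [eventually_all]
  intro u hu w hw
  obtain ⟨b, hb⟩ := exists_forall_rvec_le_of_notMem_divergentSet hw
  filter_upwards [(tendsto_rvec_atTop_of_mem_divergentSet hu).eventually_gt_atTop (α u w + b - L)]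
    with t ht
  rw [raiseIter_apply]
  linarith [hb t]

lemma eventually_inMax_le_outMax_on_divergentSet (hout : ∀ v, ∃ w, E v w)
    (hin : ∀ v, ∃ u, E u v) :
    ∀ᶠ t in atTop, ∀ v ∈ divergentSet E α σ,
      inMax E (raiseIter E α σ t) v ≤ outMax E (raiseIter E α σ t) v := by
  simp only [eventually_all]
  intro v hv
  filter_upwards [(tendsto_rvec_atTop_of_mem_divergentSet hv).eventually_gt_atTop 0] with t ht
  exact inMax_le_outMax_raiseIter_of_rvec_pos (hout v) (hin v) ht

lemma divergentSet_eq_empty (hout : ∀ v, ∃ w, E v w) (hin : ∀ v, ∃ u, E u v) :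
    divergentSet E α σ = ∅ := by
  by_contra hne
  obtain ⟨L, hL⟩ := exists_forall_exists_le_outMax_alphaR E α
  obtain ⟨T, hT⟩ := eventually_atTop.1
    ((eventually_raiseIter_lt_of_leaving_divergentSet (α := α) (σ := σ) L).and
      (eventually_inMax_le_outMax_on_divergentSet hout hin))
  have hlow : ∃ u ∈ divergentSet E α σ, L ≤ outMax E (raiseIter E α σ T) u := by
    rw [raiseIter_eq_alphaR]
    exact hL _ _ (Set.nonempty_iff_ne_empty.2 hne) fun v hv =>
      (hin v).imp fun u huv => ⟨mem_divergentSet_of_edge hout huv hv, huv⟩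
  obtain ⟨M, hLM, hM, C, hCU, ⟨v, hv⟩, hC⟩ :=
    exists_critical_set (fun v _ => hout v) hlow (hT T le_rfl).1 (hT T le_rfl).2
  have hle : ∀ t ≥ T, ∀ u ∈ divergentSet E α σ, outMax E (raiseIter E α σ t) u ≤ M :=
    outMax_raiseIter_le_of_leaving_le (fun v _ => hout v)
      (fun t ht u hu w hw => ((hT t ht).1 u hu w hw).le.trans hLM) hM
  have hconst : ∀ t ≥ T, rvec E α σ t v = rvec E α σ T v := fun t ht =>
    rvec_eq_of_critical (fun t ht v hv => hle t ht v (hCU hv)) hC t ht v hv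
  have hgt := (tendsto_rvec_atTop_of_mem_divergentSet (hCU hv)).eventually_gt_atTop (rvec E α σ T v)
  obtain ⟨t, hlt, ht⟩ := (hgt.and (eventually_ge_atTop T)).exists
  exact hlt.ne' (hconst t ht)

end Boundedness

section Convergence

lemma exists_fair (V : Type*) [Nonempty V] [Countable V] : ∃ σ : ℕ → V, Fair σ := by
  obtain ⟨f, hf⟩ := exists_surjective_nat V
  refine ⟨fun t => f t.unpair.1, fun v N => ?_⟩
  obtain ⟨k, rfl⟩ := hf v
  exact ⟨Nat.pair k N, Nat.right_le_pair k N, by simp⟩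

variable [DecidableEq V] {E : V → V → Prop} {α : V → V → ℝ} {σ : ℕ → V}

variable [Finite V]

lemma exists_tendsto_rvec (hout : ∀ v, ∃ w, E v w) (hin : ∀ v, ∃ u, E u v) :
    ∃ r, Tendsto (rvec E α σ) atTop (𝓝 r) := by
  refine ⟨fun v => ⨆ t, rvec E α σ t v, tendsto_pi_nhds.2 fun v => ?_⟩
  have hv : v ∉ divergentSet E α σ := by simp [divergentSet_eq_empty hout hin]
  exact tendsto_atTop_ciSup (fun _ _ hst => monotone_rvec hst v) (not_not.1 hv)

lemma rhoR_eq_zero_of_tendsto_rvec (hout : ∀ v, ∃ w, E v w) (hin : ∀ v, ∃ u, E u v)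
    (hσ : Fair σ) {r : V → ℝ} (hr : Tendsto (rvec E α σ) atTop (𝓝 r)) (v : V) :
    rhoR E (alphaR α r) v = 0 := by
  have hρ : Tendsto (fun t => rhoR E (raiseIter E α σ t) v) atTop
      (𝓝 (rhoR E (alphaR α r) v)) := by
    simp only [raiseIter_eq_alphaR]
    exact ((continuous_rhoR (hout v) (hin v)).comp continuous_alphaR).continuousAt.tendsto.comp hr
  have hrv := tendsto_pi_nhds.1 hr v
  have hincr : Tendsto (fun t => 2 * (rvec E α σ (t + 1) v - rvec E α σ t v)) atTop (𝓝 0) := by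
    simpa using ((hrv.comp (tendsto_add_atTop_nat 1)).sub hrv).const_mul 2
  refine tendsto_nhds_unique_of_frequently_eq hρ hincr ?_
  refine (frequently_atTop.2 (hσ v)).mono fun t ht => ?_
  rw [rvec_succ, ht, Pi.add_apply, Pi.single_eq_same]
  ring

theorem exists_rhoR_eq_zero_and_tendsto_raiseIter (hout : ∀ v, ∃ w, E v w)
    (hin : ∀ v, ∃ u, E u v) (α : V → V → ℝ) :
    ∃ αR : V → V → ℝ, (∀ v, rhoR E αR v = 0) ∧
      ∀ σ : ℕ → V, Fair σ → Tendsto (raiseIter E α σ) atTop (𝓝 αR) := by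
  cases isEmpty_or_nonempty V
  · exact ⟨α, isEmptyElim, fun σ => isEmptyElim (σ 0)⟩
  have hlim : ∀ σ, ∃ r, Tendsto (rvec E α σ) atTop (𝓝 r) := fun _ => exists_tendsto_rvec hout hin
  choose r hr using hlim
  have hr₀ : ∀ σ, 0 ≤ r σ := fun σ => ge_of_tendsto' (hr σ) rvec_nonneg
  have hbal : ∀ σ, Fair σ → ∀ v, rhoR E (alphaR α (r σ)) v = 0 := fun σ hσ =>
    rhoR_eq_zero_of_tendsto_rvec hout hin hσ (hr σ)
  have hle : ∀ σ τ, Fair τ → r σ ≤ r τ := fun σ τ hτ =>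
    le_of_tendsto' (hr σ) (rvec_le hout hin (hr₀ τ) (hbal τ hτ))
  obtain ⟨τ, hτ⟩ := exists_fair V
  refine ⟨alphaR α (r τ), hbal τ hτ, fun σ hσ => ?_⟩
  rw [← (hle σ τ hτ).antisymm (hle τ σ hσ)]
  exact ((continuous_alphaR.tendsto (r σ)).comp (hr σ)).congr fun t =>
    (raiseIter_eq_alphaR t).symm

end Convergence

section Lowering

variable {E : V → V → Prop} {α : V → V → ℝ}

lemma rhoR_flip (v : V) : rhoR (flip E) (flip α) v = rhoL E α v := rfl

variable [DecidableEq V]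

lemma balanceAt_flip (v : V) : balanceAt (flip E) (flip α) v = flip (balanceAt E α v) := by
  funext a b
  simp only [balanceAt, inMax_flip, outMax_flip]
  simp only [flip, balanceAt]
  split_ifs <;> ring

lemma raiseOp_flip (v : V) : raiseOp (flip E) (flip α) v = flip (lowerOp E α v) := by
  rw [raiseOp, lowerOp, rhoR_flip, balanceAt_flip, apply_ite flip]

lemma raiseIter_flip (σ : ℕ → V) :
    raiseIter (flip E) (flip α) σ = fun t => flip (lowerIter E α σ t) := by
  funext t
  induction t with
  | zero => rfl
  | succ t ih => rw [raiseIter, ih, raiseOp_flip, lowerIter]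

end Lowering

theorem fair_raising_lowering_unique_limits_general [Finite V] [DecidableEq V]
    (E : V → V → Prop) (hout : ∀ v, ∃ w, E v w) (hin : ∀ v, ∃ u, E u v) (α : V → V → ℝ) :
    (∃ αR : V → V → ℝ, (∀ v, rhoR E αR v = 0) ∧
      ∀ σ : ℕ → V, Fair σ → ∀ u v, E u v →
        Tendsto (fun t => raiseIter E α σ t u v) atTop (𝓝 (αR u v))) ∧
    (∃ αL : V → V → ℝ, (∀ v, rhoL E αL v = 0) ∧
      ∀ σ : ℕ → V, Fair σ → ∀ u v, E u v →
        Tendsto (fun t => lowerIter E α σ t u v) atTop (𝓝 (αL u v))) := by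
  obtain ⟨αR, hR, hαR⟩ := exists_rhoR_eq_zero_and_tendsto_raiseIter hout hin α
  obtain ⟨αL, hL, hαL⟩ :=
    exists_rhoR_eq_zero_and_tendsto_raiseIter (E := flip E) hin hout (flip α)
  refine ⟨⟨αR, hR, fun σ hσ u v _ => (hαR σ hσ).apply_nhds u |>.apply_nhds v⟩,
    ⟨flip αL, hL, fun σ hσ u v _ => ?_⟩⟩
  simp only [raiseIter_flip] at hαL
  exact (hαL σ hσ).apply_nhds v |>.apply_nhds u

/-- Any fair infinite sequence of raising operations converges
edgewise to a raising-balanced graph function that is the same for all fair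
sequences; symmetrically for lowering operations. -/
theorem fair_raising_lowering_unique_limits
    [Fintype V] [Nonempty V] [DecidableEq V] (E : V → V → Prop)
    (hout : ∀ v, ∃ w, E v w) (hin : ∀ v, ∃ u, E u v)
    (hconn : ∀ u v : V, Relation.ReflTransGen E u v)
    (α : V → V → ℝ) :
    (∃ αR : V → V → ℝ, (∀ v, rhoR E αR v = 0) ∧
      ∀ σ : ℕ → V, Fair σ → ∀ u v, E u v →
        Tendsto (fun t => raiseIter E α σ t u v) atTop (nhds (αR u v))) ∧
    (∃ αL : V → V → ℝ, (∀ v, rhoL E αL v = 0) ∧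
      ∀ σ : ℕ → V, Fair σ → ∀ u v, E u v →
        Tendsto (fun t => lowerIter E α σ t u v) atTop (nhds (αL u v))) :=
  fair_raising_lowering_unique_limits_general E hout hin α
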